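/- arXiv:1501.00903 — 2 statements merged into one kernel-verified Lean document; each statement's English description precedes it below -/
import Mathlib

section
/- Let h be a continuous real-valued function on the closed interval [a,b] (with a < b) such that the second derivative h'' exists on the open interval (a,b). Then for any c ∈ (a,b), there exists s ∈ (a,b) such that h(a)/((a−b)(a−c)) + h(b)/((b−a)(b−c)) + h(c)/((c−a)(c−b)) = h''(s)/2. -/
/-! The polynomial `P` of degree at most `n` interpolating `f` at `n + 1` nodes makes `f - P` vanish
at every node, so by repeated use of Rolle's theorem the `n`-th derivative of `f - P` vanishes at
some `s`. But `P⁽ⁿ⁾` is the constant `n!` times the divided difference of `f`, hence the divided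
difference equals `f⁽ⁿ⁾(s) / n!`. The theorem is the case `n = 2` with nodes `a < c < b`. -/

open Finset Polynomial Set

section DividedDifference

variable {F ι : Type*} [Field F] [DecidableEq ι]

/-- The divided difference of the values `r` at the nodes `v i`, `i ∈ s`, in its symmetric form;
meaningful when `v` is injective on `s` (a repeated node yields a division by zero). It is the
coefficient of degree `#s - 1` of the Lagrange interpolant. -/
def dividedDifference (s : Finset ι) (v r : ι → F) : F :=
  ∑ i ∈ s, r i / ∏ j ∈ s.erase i, (v i - v j)

theorem dividedDifference_fin_three (v r : Fin 3 → F) :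
    dividedDifference univ v r =
      r 0 / ((v 0 - v 1) * (v 0 - v 2)) + r 1 / ((v 1 - v 0) * (v 1 - v 2)) +
        r 2 / ((v 2 - v 0) * (v 2 - v 1)) := by
  have erase_zero : (univ : Finset (Fin 3)).erase 0 = {1, 2} := by decide
  have erase_one : (univ : Finset (Fin 3)).erase 1 = {0, 2} := by decide
  have erase_two : (univ : Finset (Fin 3)).erase 2 = {0, 1} := by decide
  simp [dividedDifference, Fin.sum_univ_three, erase_zero, erase_one, erase_two]

theorem eval_iterate_derivative_interpolate {s : Finset ι} {v : ι → F} (hs : s.Nonempty)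
    (hv : InjOn v s) (r : ι → F) (x : F) :
    (derivative^[#s - 1] (Lagrange.interpolate s v r)).eval x =
      (#s - 1).factorial * dividedDifference s v r := by
  have hcard : #s - (#s - 1 + 1) = 0 := by lia
  rw [Lagrange.iterate_derivative_interpolate r hv (Nat.sub_one_lt hs.card_ne_zero), hcard]
  simp [dividedDifference, eval_finsetSum]

end DividedDifference

section Rolle

variable {n : ℕ}

theorem exists_interlacing_hasDerivAt_eq_zero {f f' : ℝ → ℝ} {x : Fin (n + 1) → ℝ}
    (hx : StrictMono x) (hf : ContinuousOn f (Icc (x 0) (x (Fin.last n))))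
    (hf' : ∀ t ∈ Ioo (x 0) (x (Fin.last n)), HasDerivAt f (f' t) t)
    (heq : ∀ i : Fin n, f (x i.castSucc) = f (x i.succ)) :
    ∃ y : Fin n → ℝ, StrictMono y ∧
      ∀ i, y i ∈ Ioo (x i.castSucc) (x i.succ) ∧ f' (y i) = 0 := by
  have rolle (i : Fin n) : ∃ t ∈ Ioo (x i.castSucc) (x i.succ), f' t = 0 := by
    have hleft : x 0 ≤ x i.castSucc := hx.monotone (Fin.zero_le _)
    have hright : x i.succ ≤ x (Fin.last n) := hx.monotone (Fin.le_last _)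
    exact exists_hasDerivAt_eq_zero (hx i.castSucc_lt_succ)
      (hf.mono (Icc_subset_Icc hleft hright)) (heq i)
      fun t ht ↦ hf' t (Ioo_subset_Ioo hleft hright ht)
  choose y hy hy₀ using rolle
  refine ⟨y, fun i j hij ↦ ?_, fun i ↦ ⟨hy i, hy₀ i⟩⟩
  calc
    y i < x i.succ := (hy i).2
    _ ≤ x j.castSucc := hx.monotone (Fin.succ_le_castSucc_iff.2 hij)
    _ < y j := (hy j).1

theorem exists_last_derivative_eq_zero {f : Fin (n + 2) → ℝ → ℝ} {x : Fin (n + 2) → ℝ}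
    (hx : StrictMono x) (hf : ContinuousOn (f 0) (Icc (x 0) (x (Fin.last _))))
    (hf' : ∀ k : Fin (n + 1), ∀ t ∈ Ioo (x 0) (x (Fin.last _)),
      HasDerivAt (f k.castSucc) (f k.succ t) t)
    (hzero : ∀ i, f 0 (x i) = 0) :
    ∃ s ∈ Ioo (x 0) (x (Fin.last _)), f (Fin.last _) s = 0 := by
  induction n with
  | zero =>
    exact exists_hasDerivAt_eq_zero (hx Fin.zero_lt_one) hf ((hzero _).trans (hzero _).symm) (hf' 0)
  | succ n ih =>
    obtain ⟨y, hy, hxy⟩ := exists_interlacing_hasDerivAt_eq_zero hx hf (hf' 0)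
      fun i ↦ (hzero _).trans (hzero _).symm
    have hleft : x 0 < y 0 := (hxy 0).1.1
    have hright : y (Fin.last _) < x (Fin.last _) := (hxy (Fin.last _)).1.2
    have hcont : ContinuousOn (f 1) (Icc (y 0) (y (Fin.last _))) := fun t ht ↦
      (hf' 1 t (Icc_subset_Ioo hleft hright ht)).continuousAt.continuousWithinAt
    obtain ⟨s, hs, hs₀⟩ := ih (f := fun k ↦ f k.succ) hy hcont
      (fun k t ht ↦ hf' k.succ t (Ioo_subset_Ioo hleft.le hright.le ht)) fun i ↦ (hxy i).2
    exact ⟨s, Ioo_subset_Ioo hleft.le hright.le hs, hs₀⟩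

theorem exists_last_derivative_eq_eval_iterate_derivative {f : Fin (n + 2) → ℝ → ℝ}
    {x : Fin (n + 2) → ℝ} (hx : StrictMono x)
    (hf : ContinuousOn (f 0) (Icc (x 0) (x (Fin.last _))))
    (hf' : ∀ k : Fin (n + 1), ∀ t ∈ Ioo (x 0) (x (Fin.last _)),
      HasDerivAt (f k.castSucc) (f k.succ t) t)
    (P : ℝ[X]) (hP : ∀ i, P.eval (x i) = f 0 (x i)) :
    ∃ s ∈ Ioo (x 0) (x (Fin.last _)), f (Fin.last _) s = (derivative^[n + 1] P).eval s := by
  let g (k : Fin (n + 2)) (t : ℝ) : ℝ := f k t - (derivative^[k] P).eval t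
  have hg' (k : Fin (n + 1)) (t : ℝ) (ht : t ∈ Ioo (x 0) (x (Fin.last _))) :
      HasDerivAt (g k.castSucc) (g k.succ t) t := by
    simp only [g, Fin.val_castSucc, Fin.val_succ, Function.iterate_succ_apply']
    exact (hf' k t ht).sub ((derivative^[k] P).hasDerivAt t)
  obtain ⟨s, hs, hs₀⟩ := exists_last_derivative_eq_zero hx (hf.sub P.continuousOn) hg'
    fun i ↦ sub_eq_zero.2 (hP i).symm
  exact ⟨s, hs, sub_eq_zero.1 hs₀⟩

end Rolle

theorem exists_dividedDifference_eq_div_factorial {n : ℕ} {f : Fin (n + 2) → ℝ → ℝ}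
    {x : Fin (n + 2) → ℝ} (hx : StrictMono x)
    (hf : ContinuousOn (f 0) (Icc (x 0) (x (Fin.last _))))
    (hf' : ∀ k : Fin (n + 1), ∀ t ∈ Ioo (x 0) (x (Fin.last _)),
      HasDerivAt (f k.castSucc) (f k.succ t) t) :
    ∃ s ∈ Ioo (x 0) (x (Fin.last _)),
      dividedDifference univ x (fun i ↦ f 0 (x i)) = f (Fin.last _) s / (n + 1).factorial := by
  have hinj : InjOn x (univ : Finset (Fin (n + 2))) := hx.injective.injOn
  obtain ⟨s, hs, hfs⟩ := exists_last_derivative_eq_eval_iterate_derivative hx hf hf'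
    (Lagrange.interpolate univ x fun i ↦ f 0 (x i))
    fun i ↦ Lagrange.eval_interpolate_at_node _ hinj (mem_univ i)
  have hP := eval_iterate_derivative_interpolate univ_nonempty hinj (fun i ↦ f 0 (x i)) s
  rw [Finset.card_fin, Nat.add_succ_sub_one] at hP
  refine ⟨s, hs, ?_⟩
  rw [hfs, hP, mul_div_cancel_left₀ _ (by positivity)]

/-- If `h` is continuous on `[a,b]`, has derivative `h'` and second derivative
`h''` on `(a,b)`, then for any `c ∈ (a,b)` there is `s ∈ (a,b)` with
`h(a)/((a−b)(a−c)) + h(b)/((b−a)(b−c)) + h(c)/((c−a)(c−b)) = h''(s)/2`. -/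
theorem stmt_15 (a b c : ℝ) (hac : a < c) (hcb : c < b)
    (h h' h'' : ℝ → ℝ)
    (hcont : ContinuousOn h (Set.Icc a b))
    (hderiv : ∀ x ∈ Set.Ioo a b, HasDerivAt h (h' x) x)
    (hderiv2 : ∀ x ∈ Set.Ioo a b, HasDerivAt h' (h'' x) x) :
    ∃ s ∈ Set.Ioo a b,
      h a / ((a - b) * (a - c)) + h b / ((b - a) * (b - c)) +
        h c / ((c - a) * (c - b)) = h'' s / 2 := by
  have hx : StrictMono ![a, c, b] := by simp [hac, hcb]
  have hf' (k : Fin 2) (t : ℝ) (ht : t ∈ Set.Ioo a b) :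
      HasDerivAt (![h, h', h''] k.castSucc) (![h, h', h''] k.succ t) t := by
    fin_cases k
    exacts [hderiv t ht, hderiv2 t ht]
  obtain ⟨s, hs, hmean⟩ :=
    exists_dividedDifference_eq_div_factorial (f := ![h, h', h'']) hx hcont hf'
  refine ⟨s, hs, ?_⟩
  calc
    h a / ((a - b) * (a - c)) + h b / ((b - a) * (b - c)) + h c / ((c - a) * (c - b))
      = dividedDifference univ ![a, c, b] (fun i ↦ h (![a, c, b] i)) := by
        rw [dividedDifference_fin_three]
        simp only [Matrix.cons_val]
        ring
    _ = h'' s / 2 := hmean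
end

section
/- The expectation E_n of the number of non-zero-blocks of a uniformly random (c,m)-colored B_n-partition satisfies E_n ~ n/log n as n → ∞; that is, E_n·(log n)/n → 1. -/
open Filter

def Tnk (m c : ℕ) : ℕ → ℕ → ℕ
  | 0, 0 => 1
  | 0, _ + 1 => 0
  | n + 1, 0 => c * Tnk m c n 0
  | n + 1, k + 1 => Tnk m c n k + (m * (k + 1) + c) * Tnk m c n (k + 1)

def Ttot (m c n : ℕ) : ℕ := ∑ k ∈ Finset.range (n + 1), Tnk m c n k

/-- The expectation `E_n = (∑_k k·T_{n,k})/T_n`. -/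
noncomputable def En (m c n : ℕ) : ℝ :=
  (∑ k ∈ Finset.range (n + 1), (k : ℝ) * Tnk m c n k) / Ttot m c n

/-!
Dobinski's formula `T_n · exp (1/m) = ∑_k (m k + c)^n / (m^k k!)` turns `T_n` into the total mass of
a sequence of weights whose mean is exactly `E_n + 1/m`. The ratio of consecutive weights at `k` is
about `exp (n / k) / (m k)`, so the weights at least double up to `k ≈ n / log n` and at least halve
after it. The mean of such a sequence lies within `2` of the turning point.
-/

open Finset Topology

section FirstMoment

variable {w : ℕ → ℝ} {S M r : ℝ}

theorem firstMoment_le_of_succ_le_mul {K : ℕ} (hw : ∀ k, 0 ≤ w k) (hS : HasSum w S)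
    (hM : HasSum (fun k ↦ k * w k) M) (hr₀ : 0 ≤ r) (hr₁ : r < 1)
    (hdecay : ∀ k, K ≤ k → w (k + 1) ≤ r * w k) :
    M ≤ (K + r / (1 - r) ^ 2) * S := by
  have hgeom (j : ℕ) : w (j + K) ≤ r ^ j * w K := by
    simpa using le_geom (u := fun j ↦ w (j + K)) hr₀ j fun i _ ↦ by
      simpa only [add_right_comm] using hdecay (i + K) (by lia)
  have hcentered : HasSum (fun k : ℕ ↦ (k - K : ℝ) * w k) (M - K * S) := by
    simpa only [sub_mul] using hM.sub (hS.mul_left (K : ℝ))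
  have hhead : ∑ k ∈ range K, (k - K : ℝ) * w k ≤ 0 := sum_nonpos fun k hk ↦
    mul_nonpos_of_nonpos_of_nonneg (sub_nonpos.2 (mod_cast (mem_range.1 hk).le)) (hw k)
  have htail : M - K * S - ∑ k ∈ range K, (k - K : ℝ) * w k ≤ r / (1 - r) ^ 2 * w K := by
    refine hasSum_le (fun j ↦ ?_) ((hasSum_nat_add_iff' K).2 hcentered)
      ((hasSum_coe_mul_geometric_of_norm_lt_one (by rwa [Real.norm_of_nonneg hr₀])).mul_right (w K))
    rw [Nat.cast_add, add_sub_cancel_right, mul_assoc]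
    gcongr
    exact hgeom j
  have hpeak : r / (1 - r) ^ 2 * w K ≤ r / (1 - r) ^ 2 * S := by
    gcongr
    exact le_hasSum hS K fun k _ ↦ hw k
  linarith

theorem le_firstMoment_of_le_mul_succ {L : ℕ} (hw : ∀ k, 0 ≤ w k) (hS : HasSum w S)
    (hM : HasSum (fun k ↦ k * w k) M) (hr₀ : 0 ≤ r) (hr₁ : r < 1)
    (hgrowth : ∀ k < L, w k ≤ r * w (k + 1)) :
    (L - r / (1 - r) ^ 2) * S ≤ M := by
  have hgeom (j : ℕ) (hj : j ≤ L) : w (L - j) ≤ r ^ j * w L := by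
    refine le_geom (u := fun j ↦ w (L - j)) hr₀ j fun i hi ↦ ?_
    simpa only [show L - (i + 1) + 1 = L - i by lia] using hgrowth (L - (i + 1)) (by lia)
  have hcentered : HasSum (fun k : ℕ ↦ (k - L : ℝ) * w k) (M - L * S) := by
    simpa only [sub_mul] using hM.sub (hS.mul_left (L : ℝ))
  have hhead : ∑ k ∈ range (L + 1), (k - L : ℝ) * w k ≤ M - L * S := by
    refine sum_le_hasSum _ (fun k hk ↦ mul_nonneg (sub_nonneg.2 ?_) (hw k)) hcentered
    exact mod_cast (show L ≤ k by rw [mem_range] at hk; lia)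
  have hreflect : -∑ k ∈ range (L + 1), (k - L : ℝ) * w k
      = ∑ j ∈ range (L + 1), j * w (L - j) := by
    rw [← sum_flip, ← sum_neg_distrib]
    refine sum_congr rfl fun j hj ↦ ?_
    rw [Nat.cast_sub (mem_range_succ_iff.1 hj)]
    ring
  have hsum : ∑ j ∈ range (L + 1), j * w (L - j) ≤ r / (1 - r) ^ 2 * w L := by
    refine le_trans (sum_le_sum fun j hj ↦ ?_) (sum_le_hasSum (range (L + 1))
      (fun j _ ↦ mul_nonneg (by positivity) (hw L))
      ((hasSum_coe_mul_geometric_of_norm_lt_one (by rwa [Real.norm_of_nonneg hr₀])).mul_right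
        (w L)))
    rw [mul_assoc]
    gcongr
    exact hgeom j (mem_range_succ_iff.1 hj)
  have hpeak : r / (1 - r) ^ 2 * w L ≤ r / (1 - r) ^ 2 * S := by
    gcongr
    exact le_hasSum hS L fun k _ ↦ hw k
  linarith

end FirstMoment

section Triangle

variable {m c : ℕ}

theorem Tnk_eq_zero_of_lt {n k : ℕ} (h : n < k) : Tnk m c n k = 0 := by
  induction n generalizing k with
  | zero => obtain ⟨k, rfl⟩ := Nat.exists_eq_succ_of_ne_zero h.ne'; rfl
  | succ n ih =>
    obtain ⟨k, rfl⟩ := Nat.exists_eq_succ_of_ne_zero (Nat.ne_zero_of_lt h)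
    simp only [Tnk, ih (Nat.succ_lt_succ_iff.1 h), ih (Nat.lt_of_succ_lt h), mul_zero, add_zero]

theorem Tnk_self (m c n : ℕ) : Tnk m c n n = 1 := by
  induction n with
  | zero => rfl
  | succ n ih => rw [Tnk, ih, Tnk_eq_zero_of_lt n.lt_succ_self, mul_zero, add_zero]

theorem Ttot_pos (m c n : ℕ) : 0 < Ttot m c n :=
  sum_pos' (fun _ _ ↦ Nat.zero_le _) ⟨n, self_mem_range_succ n, by simp [Tnk_self]⟩

theorem sum_Tnk_succ_mul {R : Type*} [CommSemiring R] (n : ℕ) (f : ℕ → R) :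
    ∑ k ∈ range (n + 2), Tnk m c (n + 1) k * f k
      = ∑ k ∈ range (n + 1), Tnk m c n k * (f (k + 1) + (m * k + c) * f k) := by
  have hextend : ∑ k ∈ range (n + 1), Tnk m c n k * ((m * k + c) * f k)
      = ∑ k ∈ range (n + 2), Tnk m c n k * ((m * k + c) * f k) := by
    simp [sum_range_succ _ (n + 1), Tnk_eq_zero_of_lt]
  simp_rw [mul_add (Tnk m c n _ : R), sum_add_distrib]
  rw [hextend, sum_range_succ', sum_range_succ' _ (n + 1), ← add_assoc, ← sum_add_distrib]
  congr 1
  · refine sum_congr rfl fun k _ ↦ ?_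
    simp only [Tnk]
    push_cast
    ring
  · simp only [Tnk]
    push_cast
    ring

theorem Ttot_succ (m c n : ℕ) : (Ttot m c (n + 1) : ℝ) = (m * En m c n + c + 1) * Ttot m c n := by
  have hT : (Ttot m c n : ℝ) ≠ 0 := mod_cast (Ttot_pos m c n).ne'
  have hrec := sum_Tnk_succ_mul (m := m) (c := c) n fun _ ↦ (1 : ℝ)
  simp only [mul_one] at hrec
  rw [En, add_mul, add_mul, mul_assoc, div_mul_cancel₀ _ hT, Ttot, Ttot, Nat.cast_sum, Nat.cast_sum,
    hrec, mul_sum, mul_sum, one_mul, ← sum_add_distrib, ← sum_add_distrib]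
  exact sum_congr rfl fun k _ ↦ by ring

theorem mul_add_pow_eq_sum_Tnk_mul_descPochhammer {R : Type*} [CommRing R] (x : R) (n : ℕ) :
    (m * x + c) ^ n
      = ∑ k ∈ range (n + 1), Tnk m c n k * (m ^ k * (descPochhammer R k).eval x) := by
  induction n with
  | zero => simp [Tnk]
  | succ n ih =>
    rw [sum_Tnk_succ_mul n, pow_succ, ih, sum_mul]
    refine sum_congr rfl fun k _ ↦ ?_
    rw [descPochhammer_succ_eval]
    ring

end Triangle

section Dobinski

theorem hasSum_descFactorial_mul_pow_div_factorial {𝕜 : Type*} [RCLike 𝕜] (t : 𝕜) (j : ℕ) :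
    HasSum (fun k : ℕ ↦ (k.descFactorial j : 𝕜) * (t ^ k / k.factorial))
      (t ^ j * NormedSpace.exp t) := by
  have hhead : ∑ k ∈ range j, (k.descFactorial j : 𝕜) * (t ^ k / k.factorial) = 0 :=
    sum_eq_zero fun k hk ↦ by simp [Nat.descFactorial_of_lt (mem_range.1 hk)]
  rw [← hasSum_nat_add_iff' j, hhead, sub_zero]
  refine ((NormedSpace.expSeries_div_hasSum_exp t).mul_left (t ^ j)).congr_fun fun k ↦ ?_
  have hfactorial : ((k + j).factorial : 𝕜) = k.factorial * (k + j).descFactorial j := by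
    exact_mod_cast (by simpa using (Nat.factorial_mul_descFactorial (Nat.le_add_left j k)).symm)
  have hdesc : ((k + j).descFactorial j : 𝕜) ≠ 0 :=
    mod_cast (Nat.descFactorial_pos.2 (Nat.le_add_left j k)).ne'
  rw [hfactorial, pow_add]
  field_simp

/-- The `k`-th term of the Dobinski series for `T_n`, with real parameters `m` and `c`. The
normalising factor `exp (-1/m)` is left out, so the total mass is `T_n · exp (1/m)`. -/
noncomputable def dobinskiWeight (m c : ℝ) (n k : ℕ) : ℝ :=
  (m * k + c) ^ n / (m ^ k * k.factorial)

theorem dobinskiWeight_nonneg {m c : ℝ} (hm : 0 ≤ m) (hc : 0 ≤ c) (n k : ℕ) :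
    0 ≤ dobinskiWeight m c n k := by
  unfold dobinskiWeight
  positivity

theorem dobinskiWeight_succ_left (m c : ℝ) (n k : ℕ) :
    dobinskiWeight m c (n + 1) k = (m * k + c) * dobinskiWeight m c n k := by
  unfold dobinskiWeight
  ring

theorem hasSum_dobinskiWeight {m : ℕ} (hm : 0 < m) (c n : ℕ) :
    HasSum (dobinskiWeight m c n) (Ttot m c n * Real.exp (m : ℝ)⁻¹) := by
  have hsum := hasSum_sum (s := range (n + 1)) fun j _ ↦
    (hasSum_descFactorial_mul_pow_div_factorial (m : ℝ)⁻¹ j).mul_left (Tnk m c n j * (m : ℝ) ^ j)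
  have hmass : ∑ j ∈ range (n + 1),
      (Tnk m c n j * (m : ℝ) ^ j) * ((m : ℝ)⁻¹ ^ j * NormedSpace.exp (m : ℝ)⁻¹)
        = Ttot m c n * Real.exp (m : ℝ)⁻¹ := by
    rw [Ttot, Nat.cast_sum, sum_mul, Real.exp_eq_exp_ℝ]
    refine sum_congr rfl fun j _ ↦ ?_
    rw [inv_pow]
    field_simp
  rw [hmass] at hsum
  refine hsum.congr_fun fun k ↦ ?_
  rw [dobinskiWeight, mul_add_pow_eq_sum_Tnk_mul_descPochhammer, sum_div]
  refine sum_congr rfl fun j _ ↦ ?_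
  rw [descPochhammer_eval_eq_descFactorial, inv_pow]
  field_simp

theorem hasSum_mul_dobinskiWeight {m : ℕ} (hm : 0 < m) (c n : ℕ) :
    HasSum (fun k ↦ k * dobinskiWeight m c n k)
      ((En m c n + (m : ℝ)⁻¹) * (Ttot m c n * Real.exp (m : ℝ)⁻¹)) := by
  have hm' : (m : ℝ) ≠ 0 := mod_cast hm.ne'
  have hsum := ((hasSum_dobinskiWeight hm c (n + 1)).sub
    ((hasSum_dobinskiWeight hm c n).mul_left (c : ℝ))).div_const (m : ℝ)
  convert! hsum using 1
  · funext k
    rw [dobinskiWeight_succ_left]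
    field_simp
    ring
  · rw [Ttot_succ]
    field_simp
    ring

theorem dobinskiWeight_succ_le {m c : ℝ} (hm : 0 < m) (n : ℕ) {k : ℕ} (hk : 0 < m * k + c) :
    dobinskiWeight m c n (k + 1)
      ≤ Real.exp (n * m / (m * k + c)) / (m * (k + 1)) * dobinskiWeight m c n k := by
  have hbase : m * (k + 1) + c ≤ (m * k + c) * Real.exp (m / (m * k + c)) := calc
    m * (k + 1) + c = (m * k + c) * (m / (m * k + c) + 1) := by field_simp; ring
    _ ≤ _ := by gcongr; exact Real.add_one_le_exp _
  have hpow : (m * (k + 1) + c) ^ n ≤ (m * k + c) ^ n * Real.exp (n * m / (m * k + c)) := calc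
    (m * (k + 1) + c) ^ n ≤ ((m * k + c) * Real.exp (m / (m * k + c))) ^ n := by
      gcongr
      linarith
    _ = _ := by rw [mul_pow, ← Real.exp_nat_mul, mul_div_assoc]
  calc dobinskiWeight m c n (k + 1)
      = (m * (k + 1) + c) ^ n / (m ^ (k + 1) * (k + 1).factorial) := by
        rw [dobinskiWeight, Nat.cast_succ]
    _ ≤ (m * k + c) ^ n * Real.exp (n * m / (m * k + c)) / (m ^ (k + 1) * (k + 1).factorial) := by
        gcongr
    _ = _ := by
        rw [dobinskiWeight, Nat.factorial_succ, pow_succ']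
        push_cast
        field_simp

theorem dobinskiWeight_le_succ {m c : ℝ} (hm : 0 < m) (hc : 0 ≤ c) (n k : ℕ) :
    dobinskiWeight m c n k
      ≤ m * (k + 1) * Real.exp (-(n * m / (m * (k + 1) + c))) * dobinskiWeight m c n (k + 1) := by
  have hbase : m * k + c ≤ (m * (k + 1) + c) * Real.exp (-(m / (m * (k + 1) + c))) := calc
    m * k + c = (m * (k + 1) + c) * (1 - m / (m * (k + 1) + c)) := by field_simp; ring
    _ ≤ _ := by gcongr; exact Real.one_sub_le_exp_neg _
  have hpow : (m * k + c) ^ n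
      ≤ (m * (k + 1) + c) ^ n * Real.exp (-(n * m / (m * (k + 1) + c))) := calc
    (m * k + c) ^ n ≤ ((m * (k + 1) + c) * Real.exp (-(m / (m * (k + 1) + c)))) ^ n := by gcongr
    _ = _ := by rw [mul_pow, ← Real.exp_nat_mul, mul_neg, mul_div_assoc]
  calc dobinskiWeight m c n k
      ≤ (m * (k + 1) + c) ^ n * Real.exp (-(n * m / (m * (k + 1) + c)))
          / (m ^ k * k.factorial) := by
        unfold dobinskiWeight
        gcongr
    _ = _ := by
        rw [dobinskiWeight, Nat.factorial_succ, pow_succ']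
        push_cast
        field_simp

theorem dobinskiWeight_succ_le_half {m c D : ℝ} {n k : ℕ} (hm : 0 < m) (hc : 0 ≤ c) (hD : 0 < D)
    (hn : 2 * D * Real.exp D ≤ m * n) (hk : n / D ≤ k) :
    dobinskiWeight m c n (k + 1) ≤ 1 / 2 * dobinskiWeight m c n k := by
  have hnk : (n : ℝ) ≤ D * k := (div_le_iff₀' hD).1 hk
  have hn₀ : (0 : ℝ) < n := pos_of_mul_pos_right (lt_of_lt_of_le (by positivity) hn) hm.le
  have hk₀ : (0 : ℝ) < k := lt_of_lt_of_le (by positivity) hk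
  have hexponent : n * m / (m * k + c) ≤ D := by
    rw [div_le_iff₀ (by positivity)]
    calc n * m ≤ D * k * m := by gcongr
      _ = D * (m * k) := by ring
      _ ≤ D * (m * k + c) := by gcongr; linarith
  have hratio : Real.exp (n * m / (m * k + c)) / (m * (k + 1)) ≤ 1 / 2 := by
    have hexpD : 2 * Real.exp D ≤ m * k := by
      refine le_of_mul_le_mul_left ?_ hD
      calc D * (2 * Real.exp D) = 2 * D * Real.exp D := by ring
        _ ≤ m * n := hn
        _ ≤ m * (D * k) := by gcongr
        _ = D * (m * k) := by ring
    rw [div_le_iff₀ (by positivity)]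
    linarith [Real.exp_le_exp.2 hexponent]
  exact (dobinskiWeight_succ_le hm n (by positivity)).trans
    (mul_le_mul_of_nonneg_right hratio (dobinskiWeight_nonneg hm.le hc n k))

theorem dobinskiWeight_le_half_succ {m c y : ℝ} {n k : ℕ} (hm : 0 < m) (hc : 0 ≤ c) (hy : 0 < y)
    (hn : 2 * m * n ≤ y * Real.exp y) (hk : k + 1 ≤ n / y - c / m) :
    dobinskiWeight m c n k ≤ 1 / 2 * dobinskiWeight m c n (k + 1) := by
  have hnk : y * (m * (k + 1) + c) ≤ n * m := by
    have : (k + 1 + c / m) * (y * m) ≤ n / y * (y * m) := by gcongr; linarith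
    field_simp at this
    linarith
  have hexponent : y ≤ n * m / (m * (k + 1) + c) := (le_div_iff₀ (by positivity)).2 hnk
  have hratio : m * (k + 1) * Real.exp (-(n * m / (m * (k + 1) + c))) ≤ 1 / 2 := by
    have hexpy : 2 * (m * (k + 1)) ≤ Real.exp y := by
      refine le_of_mul_le_mul_left ?_ hy
      calc y * (2 * (m * (k + 1))) ≤ 2 * (y * (m * (k + 1) + c)) := by
            linarith [mul_nonneg hy.le hc]
        _ ≤ 2 * (n * m) := by gcongr
        _ = 2 * m * n := by ring
        _ ≤ y * Real.exp y := hn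
    calc m * (k + 1) * Real.exp (-(n * m / (m * (k + 1) + c)))
        ≤ Real.exp y / 2 * Real.exp (-y) := by gcongr; linarith
      _ = 1 / 2 := by rw [Real.exp_neg]; field_simp
  exact (dobinskiWeight_le_succ hm hc n k).trans
    (mul_le_mul_of_nonneg_right hratio (dobinskiWeight_nonneg hm.le hc n (k + 1)))

end Dobinski

section Expectation

variable {m : ℕ} (c : ℕ) {n : ℕ}

theorem En_le_div_add_three {D : ℝ} (hm : 0 < m) (hD : 0 < D)
    (hn : 2 * D * Real.exp D ≤ m * n) : En m c n ≤ n / D + 3 := by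
  have hm' : (0 : ℝ) < m := mod_cast hm
  have hT : (0 : ℝ) < Ttot m c n := mod_cast Ttot_pos m c n
  have hmoment := firstMoment_le_of_succ_le_mul (K := ⌈n / D⌉₊) (r := 1 / 2)
    (dobinskiWeight_nonneg hm'.le c.cast_nonneg n)
    (hasSum_dobinskiWeight hm c n) (hasSum_mul_dobinskiWeight hm c n) (by norm_num) (by norm_num)
    fun k hk ↦ dobinskiWeight_succ_le_half hm' c.cast_nonneg hD hn (Nat.ceil_le.1 hk)
  have hmean := le_of_mul_le_mul_right hmoment (by positivity)
  have hceil : (⌈n / D⌉₊ : ℝ) < n / D + 1 := Nat.ceil_lt_add_one (by positivity)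
  have hinv : 0 < (m : ℝ)⁻¹ := by positivity
  norm_num at hmean
  linarith

theorem div_sub_le_En {y : ℝ} (hm : 0 < m) (hy : 0 < y) (hn : 2 * m * n ≤ y * Real.exp y) :
    n / y - (c / m + 4) ≤ En m c n := by
  have hm' : (0 : ℝ) < m := mod_cast hm
  have hT : (0 : ℝ) < Ttot m c n := mod_cast Ttot_pos m c n
  have hmoment := le_firstMoment_of_le_mul_succ (L := ⌊n / y - c / m⌋₊) (r := 1 / 2)
    (dobinskiWeight_nonneg hm'.le c.cast_nonneg n)
    (hasSum_dobinskiWeight hm c n) (hasSum_mul_dobinskiWeight hm c n) (by norm_num) (by norm_num)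
    fun k hk ↦ dobinskiWeight_le_half_succ hm' c.cast_nonneg hy hn
      (mod_cast (Nat.le_floor_iff' k.succ_ne_zero).1 hk)
  have hmean := le_of_mul_le_mul_right hmoment (by positivity)
  have hfloor : n / y - c / m < ⌊n / y - c / m⌋₊ + 1 := Nat.lt_floor_add_one _
  have hinv : (m : ℝ)⁻¹ ≤ 1 := inv_le_one_of_one_le₀ (mod_cast hm)
  norm_num at hmean
  linarith

end Expectation

section Asymptotics

theorem tendsto_log_two_mul_div_atTop : Tendsto (fun x : ℝ ↦ Real.log (2 * x) / x) atTop (𝓝 0) := by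
  have hlog := (Real.isLittleO_log_id_atTop.tendsto_div_nhds_zero.comp
    (tendsto_id.const_mul_atTop (two_pos (α := ℝ)))).const_mul 2
  rw [mul_zero] at hlog
  refine hlog.congr fun x ↦ ?_
  simp only [Function.comp, id]
  field_simp

theorem tendsto_div_sub_log_two_mul_atTop :
    Tendsto (fun x : ℝ ↦ x / (x - Real.log (2 * x))) atTop (𝓝 1) := by
  have hinv := (tendsto_log_two_mul_div_atTop.const_sub 1).inv₀ (by norm_num)
  rw [sub_zero, inv_one] at hinv
  refine hinv.congr' ?_
  filter_upwards [eventually_gt_atTop 0] with x hx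
  rw [one_sub_div hx.ne', inv_div]

theorem tendsto_log_natCast_atTop : Tendsto (fun n : ℕ ↦ Real.log n) atTop atTop :=
  Real.tendsto_log_atTop.comp tendsto_natCast_atTop_atTop

theorem tendsto_log_natCast_div_atTop : Tendsto (fun n : ℕ ↦ Real.log n / n) atTop (𝓝 0) :=
  Real.isLittleO_log_id_atTop.tendsto_div_nhds_zero.comp tendsto_natCast_atTop_atTop

variable {m : ℕ} (c : ℕ)

theorem eventually_div_log_sub_le_En (hm : 0 < m) :
    ∀ᶠ n : ℕ in atTop, n / Real.log n - (c / m + 4) ≤ En m c n := by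
  filter_upwards [tendsto_log_natCast_atTop.eventually_ge_atTop (2 * m), eventually_gt_atTop 0]
    with n hlog hn
  have hm' : (0 : ℝ) < m := mod_cast hm
  refine div_sub_le_En c hm (by linarith) ?_
  rw [Real.exp_log (mod_cast hn)]
  gcongr

theorem eventually_En_le_div_log_sub_log_add (hm : 0 < m) :
    ∀ᶠ n : ℕ in atTop, En m c n ≤ n / (Real.log n - Real.log (2 * Real.log n)) + 3 := by
  have hlt : ∀ᶠ x : ℝ in atTop, Real.log (2 * x) < x := by
    filter_upwards [tendsto_log_two_mul_div_atTop.eventually_lt_const one_pos,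
      eventually_gt_atTop 0] with x hx hx₀
    rwa [div_lt_one hx₀] at hx
  filter_upwards [tendsto_log_natCast_atTop.eventually hlt,
    tendsto_log_natCast_atTop.eventually_ge_atTop 1, eventually_gt_atTop 0] with n hlt hlog hn
  -- `D = log n - log (2 log n)` satisfies `2 D exp D = D n / log n ≤ n`.
  refine En_le_div_add_three c hm (sub_pos.2 hlt) ?_
  have hn' : (0 : ℝ) < n := mod_cast hn
  have hm' : (1 : ℝ) ≤ m := mod_cast hm
  rw [Real.exp_sub, Real.exp_log hn', Real.exp_log (by positivity)]
  calc 2 * (Real.log n - Real.log (2 * Real.log n)) * (n / (2 * Real.log n))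
      ≤ 2 * Real.log n * (n / (2 * Real.log n)) := by
        gcongr
        exact sub_le_self _ (Real.log_nonneg (by linarith))
    _ = 1 * n := by field_simp
    _ ≤ m * n := by gcongr

end Asymptotics

/-- For `m = 1` and `c = 0`, `E_n` is the mean number of blocks of a uniformly random set
partition. -/
theorem stmt_16_general (m c : ℕ) (hm : 0 < m) :
    Tendsto (fun n : ℕ => En m c n * Real.log n / n) atTop (𝓝 1) := by
  have hlower : Tendsto (fun n : ℕ ↦ 1 - (c / m + 4) * (Real.log n / n)) atTop (𝓝 1) := by
    simpa using (tendsto_log_natCast_div_atTop.const_mul (c / m + 4 : ℝ)).const_sub 1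
  have hupper : Tendsto (fun n : ℕ ↦ Real.log n / (Real.log n - Real.log (2 * Real.log n))
      + 3 * (Real.log n / n)) atTop (𝓝 1) := by
    simpa using (tendsto_div_sub_log_two_mul_atTop.comp tendsto_log_natCast_atTop).add
      (tendsto_log_natCast_div_atTop.const_mul 3)
  refine tendsto_of_tendsto_of_tendsto_of_le_of_le' hlower hupper ?_ ?_
  · filter_upwards [eventually_div_log_sub_le_En c hm, eventually_gt_atTop 1] with n hE hn
    have hlog : 0 < Real.log n := Real.log_pos (mod_cast hn)
    calc 1 - (c / m + 4) * (Real.log n / n)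
        = (n / Real.log n - (c / m + 4)) * Real.log n / n := by field_simp
      _ ≤ En m c n * Real.log n / n := by gcongr
  · filter_upwards [eventually_En_le_div_log_sub_log_add c hm, eventually_gt_atTop 1] with n hE hn
    calc En m c n * Real.log n / n
        ≤ (n / (Real.log n - Real.log (2 * Real.log n)) + 3) * Real.log n / n := by gcongr
      _ = _ := by field_simp

/-- `E_n ~ n/log n` as `n → ∞`, i.e. `E_n·(log n)/n → 1`. -/
theorem stmt_16 (m c : ℕ) (hm : 0 < m) (hc : 0 < c) :
    Tendsto (fun n : ℕ => En m c n * Real.log n / n) atTop (nhds 1) :=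
  stmt_16_general m c hm
end
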